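/- Let (G,+) be a finite abelian group and E a field of characteristic 0 or of characteristic p not dividing |G| containing a primitive N-th root of unity, N = exp(G). Then for every nonzero function f : G → E with Fourier transform f̂, |supp(f)| · |supp(f̂)| ≥ |G| + |supp(f̂)| − |H(supp(f̂))|, where H(supp(f̂)) = {ψ ∈ Ĝ : ψ·supp(f̂) = supp(f̂)} is the stabilizer of supp(f̂) in the character group Ĝ. -/

import Mathlib

open Function Set

/-- The Fourier transform of `f : G → E`, `f̂(χ) = ∑_{x ∈ G} f(x) χ(-x)`. -/
def fourierTransform {G E : Type*} [AddCommGroup G] [Fintype G] [Field E]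
    (f : G → E) (χ : AddChar G E) : E :=
  ∑ x, f x * χ (-x)

/-!
Arrange the values of `F = f̂` in the matrix `(F (χ * ψ))` indexed by pairs of characters. It
factors through the diagonal matrix of `f`, so its rank is at most `|supp f|`. Conversely, a
character `χ` outside the stabilizer of `T = supp F` satisfies `χ * ψ ∈ T` for some `ψ ∉ T`, so the
translates `T * ψ⁻¹` with `ψ ∉ T` cover the complement of the stabilizer. In an irredundant
subcover, indexed by `J`, each translate has a point of its own, which makes the corresponding rows
of the matrix independent; they all vanish at the trivial character, hence a row `ψ₀ ∈ T`
can be added. So `|J| + 1 ≤ |supp f|`, while counting the cover gives `|Ĝ| ≤ |H(T)| + |J| * |T|`.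
-/

section Cover

lemma exists_irredundant_subcover {ι α : Type*} {t : ι → Set α} {s : Set α} {I : Finset ι}
    (hI : s ⊆ ⋃ i ∈ I, t i) :
    ∃ J ⊆ I, s ⊆ ⋃ i ∈ J, t i ∧ ∀ i ∈ J, ∃ x ∈ t i, ∀ j ∈ J, j ≠ i → x ∉ t j := by
  classical
  obtain ⟨J, hJI, hJ⟩ :=
    exists_minimal_le_of_wellFoundedLT (fun J : Finset ι => s ⊆ ⋃ i ∈ J, t i) I hI
  refine ⟨J, hJI, hJ.prop, fun i hi => ?_⟩
  by_contra! hredundant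
  have herase : s ⊆ ⋃ j ∈ J.erase i, t j := by
    intro x hx
    obtain ⟨j, hj, hxj⟩ := mem_iUnion₂.1 (hJ.prop hx)
    obtain rfl | hji := eq_or_ne j i
    · obtain ⟨k, hk, hkj, hxk⟩ := hredundant x hxj
      exact mem_iUnion₂.2 ⟨k, Finset.mem_erase.2 ⟨hkj, hk⟩, hxk⟩
    · exact mem_iUnion₂.2 ⟨j, Finset.mem_erase.2 ⟨hji, hj⟩, hxj⟩
  exact Finset.notMem_erase i J (hJ.le_of_le herase (J.erase_subset i) hi)

open scoped Pointwise in
lemma compl_stabilizer_subset_iUnion {Γ α : Type*} [Group Γ] [MulAction Γ α] {T : Set α}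
    (hT : T.Finite) :
    (MulAction.stabilizer Γ T : Set Γ)ᶜ ⊆ ⋃ a ∈ Tᶜ, {g : Γ | g • a ∈ T} := by
  intro g hg
  by_contra huncovered
  have hinv : g⁻¹ ∈ MulAction.stabilizer Γ T := by
    refine (MulAction.mem_stabilizer_set' hT).2 fun a ha => ?_
    by_contra hga
    exact huncovered (mem_iUnion₂.2 ⟨g⁻¹ • a, hga, by simpa using ha⟩)
  exact hg (inv_mem_iff.1 hinv)

lemma natCard_le_ncard_add_mul_of_compl_subset {ι α : Type*} [Finite α] {s : Set α}
    {t : ι → Set α} {J : Finset ι} {n : ℕ} (hcover : sᶜ ⊆ ⋃ i ∈ J, t i)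
    (ht : ∀ i ∈ J, (t i).ncard ≤ n) :
    Nat.card α ≤ s.ncard + J.card * n :=
  calc
    Nat.card α = s.ncard + sᶜ.ncard := (ncard_add_ncard_compl s).symm
    _ ≤ s.ncard + (⋃ i ∈ J, t i).ncard := by gcongr; exact toFinite _
    _ ≤ s.ncard + ∑ i ∈ J, (t i).ncard := by gcongr; exact J.set_ncard_biUnion_le t
    _ ≤ s.ncard + J.card * n := by gcongr; exact J.sum_le_card_nsmul _ n ht

end Cover

section Rank

lemma linearIndepOn_of_forall_exists_apply_ne_zero {ι α R : Type*} [Ring R] [NoZeroDivisors R]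
    {v : ι → α → R} {J : Finset ι}
    (h : ∀ i ∈ J, ∃ x, v i x ≠ 0 ∧ ∀ j ∈ J, j ≠ i → v j x = 0) :
    LinearIndepOn R v J := by
  refine linearIndepOn_finset_iff.2 fun c hc i hi => ?_
  obtain ⟨x, hix, hx⟩ := h i hi
  have hmul : c i * v i x = 0 :=
    calc
      c i * v i x = ∑ j ∈ J, c j * v j x :=
        (Finset.sum_eq_single_of_mem (f := fun j => c j * v j x) i hi fun j hj hji => by
          rw [hx j hj hji, mul_zero]).symm
      _ = 0 := by simpa using congrFun hc x
  exact (mul_eq_zero.1 hmul).resolve_right hix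

lemma linearIndepOn_insert_of_apply_ne_zero {ι α K : Type*} [DivisionRing K] {v : ι → α → K}
    {s : Set ι} {i : ι} {x : α} (hs : LinearIndepOn K v s) (hi : v i x ≠ 0)
    (hx : ∀ j ∈ s, v j x = 0) :
    LinearIndepOn K v (insert i s) := by
  refine hs.insert fun hmem => hi ?_
  have hspan : Submodule.span K (v '' s) ≤ LinearMap.ker (LinearMap.proj x) :=
    Submodule.span_le.2 (forall_mem_image.2 hx)
  exact hspan hmem

lemma card_le_rank_of_linearIndepOn_row {m n K : Type*} [Fintype n] [Field K]
    {A : Matrix m n K} {J : Finset m} (h : LinearIndepOn K A.row J) : J.card ≤ A.rank :=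
  have hsubmatrix : LinearIndependent K (A.submatrix ((↑) : J → m) id).row := h
  calc
    J.card = (A.submatrix ((↑) : J → m) id).rank := by
      rw [hsubmatrix.rank_matrix, Fintype.card_coe]
    _ ≤ A.rank := A.rank_submatrix_le _ _

end Rank

section TranslateMatrix

/-- The matrix whose `g`-th row is the right translate `x ↦ F (x * g)` of `F`; up to reindexing by
inversion this is Dedekind's group matrix. -/
def translateMatrix {Γ K : Type*} [Mul Γ] (F : Γ → K) : Matrix Γ Γ K :=
  Matrix.of fun g x => F (x * g)

lemma translateMatrix_apply {Γ K : Type*} [Mul Γ] (F : Γ → K) (g x : Γ) :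
    translateMatrix F g x = F (x * g) :=
  rfl

variable {Γ K : Type*} [Fintype Γ] [Field K]

lemma card_add_one_le_rank_translateMatrix [MulOneClass Γ] {F : Γ → K} (hF : F ≠ 0)
    {J : Finset Γ} (hJ : ∀ g ∈ J, F g = 0)
    (hirredundant : ∀ g ∈ J, ∃ x, F (x * g) ≠ 0 ∧ ∀ k ∈ J, k ≠ g → F (x * k) = 0) :
    J.card + 1 ≤ (translateMatrix F).rank := by
  classical
  obtain ⟨g₀, hg₀⟩ := Function.ne_iff.1 hF
  have hg₀J : g₀ ∉ J := fun h => hg₀ (hJ g₀ h)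
  have hrows : LinearIndepOn K (translateMatrix F).row J :=
    linearIndepOn_of_forall_exists_apply_ne_zero hirredundant
  have hinsert : LinearIndepOn K (translateMatrix F).row (insert g₀ J : Finset Γ) := by
    rw [Finset.coe_insert]
    refine linearIndepOn_insert_of_apply_ne_zero (x := 1) hrows ?_ fun g hg => ?_
    · simpa [translateMatrix_apply] using hg₀
    · simpa [translateMatrix_apply] using hJ g hg
  rw [← Finset.card_insert_of_notMem hg₀J]
  exact card_le_rank_of_linearIndepOn_row hinsert

open scoped Pointwise in
theorem natCard_add_ncard_support_le [Group Γ] (F : Γ → K) :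
    Nat.card Γ + (support F).ncard ≤
      (MulAction.stabilizer Γ (support F) : Set Γ).ncard +
        (translateMatrix F).rank * (support F).ncard := by
  classical
  obtain rfl | hF := eq_or_ne F 0
  · simp
  have hcover := compl_stabilizer_subset_iUnion (Γ := Γ) (support F).toFinite
  obtain ⟨J, hJ, hJcover, hirredundant⟩ := exists_irredundant_subcover
    (I := (support F)ᶜ.toFinset) (by simpa only [mem_toFinset] using hcover)
  have hcount : Nat.card Γ ≤
      (MulAction.stabilizer Γ (support F) : Set Γ).ncard + J.card * (support F).ncard :=
    natCard_le_ncard_add_mul_of_compl_subset hJcover fun g _ =>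
      (ncard_preimage_of_injective_subset_range (mul_left_injective g)
        (by simp [(mul_right_surjective g).range_eq])).le
  have hrank : J.card + 1 ≤ (translateMatrix F).rank :=
    card_add_one_le_rank_translateMatrix hF (fun g hg => by simpa using hJ hg)
      (by simpa using hirredundant)
  calc
    Nat.card Γ + (support F).ncard
      ≤ (MulAction.stabilizer Γ (support F) : Set Γ).ncard +
          (J.card + 1) * (support F).ncard := by linarith
    _ ≤ (MulAction.stabilizer Γ (support F) : Set Γ).ncard +
          (translateMatrix F).rank * (support F).ncard := by gcongr

end TranslateMatrix

section AddChar

instance finite_addChar {A R : Type*} [AddMonoid A] [Finite A] [CommRing R] [IsDomain R] :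
    Finite (AddChar A R) :=
  have : Finite (Multiplicative A →* R) := (linearIndependent_monoidHom (Multiplicative A) R).finite
  Finite.of_equiv _ AddChar.toMonoidHomEquiv.symm

lemma natCard_addChar_of_hasEnoughRootsOfUnity (A M : Type*) [AddCommGroup A] [Finite A]
    [CommMonoid M] [HasEnoughRootsOfUnity M (AddMonoid.exponent A)] :
    Nat.card (AddChar A M) = Nat.card A := by
  have : HasEnoughRootsOfUnity M (Monoid.exponent (Multiplicative A)) := by
    rwa [Monoid.exponent_multiplicative]
  calc
    Nat.card (AddChar A M) = Nat.card (Multiplicative A →* Mˣ) :=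
      Nat.card_congr (AddChar.toMonoidHomEquiv.trans MonoidHom.toHomUnitsMulEquiv.toEquiv)
    _ = Nat.card (Multiplicative A) := CommGroup.card_monoidHom_of_hasEnoughRootsOfUnity _ M
    _ = Nat.card A := Nat.card_congr Multiplicative.toAdd

lemma natCard_addChar_of_isPrimitiveRoot {A R : Type*} [AddCommGroup A] [Finite A] [CommRing R]
    [IsDomain R] {ζ : R} (hζ : IsPrimitiveRoot ζ (AddMonoid.exponent A)) :
    Nat.card (AddChar A R) = Nat.card A :=
  have : NeZero (AddMonoid.exponent A) := ⟨AddMonoid.exponent_ne_zero_of_finite⟩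
  have : HasEnoughRootsOfUnity R (AddMonoid.exponent A) := ⟨⟨ζ, hζ⟩, inferInstance⟩
  natCard_addChar_of_hasEnoughRootsOfUnity A R

end AddChar

section Fourier

variable {G E : Type*} [AddCommGroup G] [Fintype G] [Field E]

lemma translateMatrix_fourierTransform [DecidableEq G] (f : G → E) :
    translateMatrix (fourierTransform f) =
      (Matrix.of fun (ψ : AddChar G E) x => ψ (-x)) * Matrix.diagonal f *
        (Matrix.of fun x (χ : AddChar G E) => χ (-x)) := by
  ext ψ χ
  rw [translateMatrix_apply, Matrix.mul_apply]
  simp only [fourierTransform, AddChar.mul_apply, Matrix.mul_diagonal, Matrix.of_apply]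
  exact Finset.sum_congr rfl fun x _ => by ring

lemma rank_translateMatrix_fourierTransform_le [Fintype (AddChar G E)] (f : G → E) :
    (translateMatrix (fourierTransform f)).rank ≤ (support f).ncard := by
  classical
  calc
    (translateMatrix (fourierTransform f)).rank ≤ (Matrix.diagonal f).rank := by
      rw [translateMatrix_fourierTransform]
      exact (Matrix.rank_mul_le_left _ _).trans (Matrix.rank_mul_le_right _ _)
    _ = (support f).ncard := by
      rw [Matrix.rank_diagonal, ← Nat.card_eq_fintype_card, ← Nat.card_coe_set_eq]
      rfl

end Fourier

theorem stmt_17_general {G E : Type*} [AddCommGroup G] [Fintype G] [Field E] (f : G → E) :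
    (Nat.card (AddChar G E) : ℤ) + (Function.support (fourierTransform f)).ncard -
        ({ψ : AddChar G E |
            (fun χ => ψ * χ) '' Function.support (fourierTransform f)
              = Function.support (fourierTransform f)} : Set (AddChar G E)).ncard ≤
      ((Function.support f).ncard : ℤ) * (Function.support (fourierTransform f)).ncard := by
  have := Fintype.ofFinite (AddChar G E)
  rw [sub_le_iff_le_add']
  -- The set `{ψ | …}` is definitionally the carrier of `MulAction.stabilizer`.
  exact_mod_cast (natCard_add_ncard_support_le (fourierTransform f)).trans
    (Nat.add_le_add_left (Nat.mul_le_mul_right _ (rank_translateMatrix_fourierTransform_le f)) _)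

/-- the sharpened Donoho–Stark uncertainty principle:
`|supp f|·|supp f̂| ≥ |G| + |supp f̂| - |H(supp f̂)|`, where `H(supp f̂)` is the stabilizer
of `supp f̂` in the character group. -/
theorem stmt_17 {G E : Type*} [AddCommGroup G] [Fintype G] [Field E]
    (hchar : (Fintype.card G : E) ≠ 0)
    (hroot : ∃ ζ : E, IsPrimitiveRoot ζ (AddMonoid.exponent G))
    (f : G → E) (hf : f ≠ 0) :
    (Fintype.card G : ℤ) + (Function.support (fourierTransform f)).ncard -
        ({ψ : AddChar G E |
            (fun χ => ψ * χ) '' Function.support (fourierTransform f)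
              = Function.support (fourierTransform f)} : Set (AddChar G E)).ncard ≤
      ((Function.support f).ncard : ℤ) * (Function.support (fourierTransform f)).ncard := by
  obtain ⟨ζ, hζ⟩ := hroot
  rw [← Nat.card_eq_fintype_card, ← natCard_addChar_of_isPrimitiveRoot hζ]
  exact stmt_17_general f
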